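/- Let n ≥ 2 be an integer, p ≥ n a real number, K ⊂ ℝⁿ a nonempty compact set, and let A : [0,∞) → ℝ satisfy conditions (i)–(iv) as in the context. Let u ∈ C¹(ℝⁿ\K) be a bounded weak solution of div(|∇u|^{p-2}A(|∇u|)∇u) = 0 in ℝⁿ\K. If there is a constant c ∈ ℝ such that u(x) → c as x → x₀ within ℝⁿ\K for every x₀ ∈ ∂K, then u(x) = c for every x ∈ ℝⁿ\K. -/

import Mathlib

/-!
The proof is a Caccioppoli estimate combined with the fact that, for `p ≥ n`, cutoff functions equal
to `1` on arbitrarily large balls can have arbitrarily small `p`-energy.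

Fix `ε > 0` and let `g = (u - c - ε)⁺` on the complement of `K`, extended by zero. The boundary
condition makes `g` vanish near `K`, so `g ^ 2` is `C¹` on the whole space with gradient `2 g ∇u`,
and `g ^ 2 η ^ p` is an admissible `C¹` test function for every cutoff `η`
(`weak_form_of_contDiff_one` passes from smooth to `C¹` test functions by mollification). As `u` is
bounded, testing with it and applying Young's inequality give
`∫ g |∇u| ^ p η ^ p ≤ C ∫ |∇η| ^ p` with `C` independent of `η` (`caccioppoli`). The cutoffs of
`exists_cutoff` make the right-hand side arbitrarily small, so `g |∇u| ^ p = 0`. Hence `g ^ 2` has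
zero gradient on the connected space `ℝⁿ`, and it vanishes on the nonempty set `K`, so `g = 0`, that
is, `u ≤ c + ε`, for every `ε` (`weak_solution_le`). The flux
`F = |∇u| ^ (p - 2) A(|∇u|) ∇u` enters through its continuity, growth and ellipticity, all of which
are inherited by `-u` with flux `-F`; this gives `u ≥ c`.

Differentials `fderiv` are used in place of gradients until the final theorem, so the weak form reads
`∫ dψ(F) = 0`.
-/

open Real MeasureTheory Set Filter Topology
open scoped RealInnerProductSpace

/-! ### Elementary inequalities -/

/-- Young's inequality in the form needed to absorb the cross term: the coefficient of `a ^ p` is the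
prescribed `δ`. -/
theorem young_split {p : ℝ} (hp : 1 ≤ p) {a b C δ : ℝ} (ha : 0 ≤ a) (hb : 0 ≤ b)
    (hC : 0 ≤ C) (hδ : 0 < δ) :
    C * a ^ (p - 1) * b ≤ δ * a ^ p + C * (C / δ) ^ (p - 1) * b ^ p := by
  have pow_split : ∀ t : ℝ, 0 ≤ t → t ^ p = t ^ (p - 1) * t := fun t ht => by
    rw [← Real.rpow_add_one' ht (by linarith)]; ring_nf
  have h1 : 0 ≤ a ^ (p - 1) := Real.rpow_nonneg ha _
  have h2 : 0 ≤ a ^ p := Real.rpow_nonneg ha _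
  have h3 : 0 ≤ b ^ p := Real.rpow_nonneg hb _
  have h4 : 0 ≤ (C / δ) ^ (p - 1) := Real.rpow_nonneg (by positivity) _
  rcases le_total (C * b) (δ * a) with h | h
  · have : C * a ^ (p - 1) * b ≤ δ * a ^ p := by
      rw [pow_split a ha]
      nlinarith [mul_le_mul_of_nonneg_left h h1]
    have : 0 ≤ C * (C / δ) ^ (p - 1) * b ^ p := by positivity
    linarith
  · have hab : a ≤ C / δ * b := by
      rw [div_mul_eq_mul_div, le_div_iff₀ hδ]; linarith
    have h5 : a ^ (p - 1) ≤ (C / δ) ^ (p - 1) * b ^ (p - 1) := by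
      rw [← Real.mul_rpow (by positivity) hb]
      exact Real.rpow_le_rpow ha hab (by linarith)
    have : C * a ^ (p - 1) * b ≤ C * (C / δ) ^ (p - 1) * b ^ p := by
      rw [pow_split b hb]
      calc C * a ^ (p - 1) * b ≤ C * ((C / δ) ^ (p - 1) * b ^ (p - 1)) * b := by gcongr
        _ = _ := by ring
    have : 0 ≤ δ * a ^ p := by positivity
    linarith

/-- The square makes the truncation `s ↦ max s 0` of class `C¹`. -/
theorem hasDerivAt_max_sq (t : ℝ) :
    HasDerivAt (fun s : ℝ => max s 0 ^ 2) (2 * max t 0) t := by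
  rcases lt_trichotomy t 0 with h | h | h
  · rw [max_eq_right h.le]
    refine HasDerivAt.congr_of_eventuallyEq (f := fun _ => 0)
      (by simpa using hasDerivAt_const t (0:ℝ)) ?_
    filter_upwards [Iio_mem_nhds h] with s hs
    simp [max_eq_right (le_of_lt (by simpa using hs))]
  · subst h
    rw [hasDerivAt_iff_isLittleO]
    have : (fun s : ℝ => s ^ 2) =o[𝓝 0] fun s : ℝ => s := by
      simpa using Asymptotics.isLittleO_pow_id (𝕜 := ℝ) (n := 2) (by norm_num)
    refine Asymptotics.IsBigO.trans_isLittleO (g := fun s : ℝ => s ^ 2) ?_ (by simpa using this)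
    refine Asymptotics.IsBigO.of_bound 1 (Eventually.of_forall fun s => ?_)
    simp only [max_self, ne_eq, OfNat.ofNat_ne_zero, not_false_eq_true, zero_pow, sub_zero, mul_zero,
      smul_zero, norm_pow, Real.norm_eq_abs, one_mul, sq_abs]
    rcases le_total s 0 with hs | hs <;> simp [hs, sq_nonneg]
  · rw [max_eq_left h.le]
    refine HasDerivAt.congr_of_eventuallyEq (f := fun s => s ^ 2)
      (by simpa using hasDerivAt_pow 2 t) ?_
    filter_upwards [Ioi_mem_nhds h] with s hs
    simp [max_eq_left (le_of_lt (by simpa using hs))]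

/-- Holds because at most one summand is nonzero. -/
theorem norm_sum_rpow_le {ι F : Type*} [NormedAddCommGroup F] {p : ℝ} (hp : 0 < p)
    (s : Finset ι) (f : ι → F) (hf : ∀ i ∈ s, ∀ j ∈ s, f i ≠ 0 → f j ≠ 0 → i = j) :
    ‖∑ i ∈ s, f i‖ ^ p ≤ ∑ i ∈ s, ‖f i‖ ^ p := by
  by_cases h : ∀ i ∈ s, f i = 0
  · rw [Finset.sum_eq_zero h, norm_zero, Real.zero_rpow hp.ne']
    exact Finset.sum_nonneg fun i _ => Real.rpow_nonneg (norm_nonneg _) _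
  · push Not at h
    obtain ⟨j, hj, hj0⟩ := h
    rw [Finset.sum_eq_single_of_mem j hj fun i hi hij => by
      by_contra h0
      exact hij (hf i hi j hj h0 hj0)]
    exact Finset.single_le_sum (f := fun i => ‖f i‖ ^ p)
      (fun i _ => Real.rpow_nonneg (norm_nonneg _) _) hj

section

variable {E : Type*} [NormedAddCommGroup E] [NormedSpace ℝ E] [FiniteDimensional ℝ E]
  [MeasurableSpace E] [BorelSpace E]

/-! ### Test functions of class `C¹` -/

/-- A compactly supported `C¹` function is a `C¹` limit of its mollifications, all supported in one
compact subset `T` of `U`. -/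
theorem exists_smooth_approx (μ : Measure E) [μ.IsAddHaarMeasure] {U : Set E} (hU : IsOpen U)
    {v : E → ℝ} (hv : ContDiff ℝ 1 v) (hvc : HasCompactSupport v) (hvU : tsupport v ⊆ U) :
    ∃ T : Set E, IsCompact T ∧ T ⊆ U ∧ tsupport v ⊆ T ∧ ∀ ε > 0, ∃ ψ : E → ℝ,
      ContDiff ℝ (⊤ : ℕ∞) ψ ∧ HasCompactSupport ψ ∧ tsupport ψ ⊆ T ∧
      ∀ x, ‖fderiv ℝ ψ x - fderiv ℝ v x‖ ≤ ε := by
  obtain ⟨d, hd, hdU⟩ := hvc.isCompact.exists_cthickening_subset_open hU hvU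
  refine ⟨Metric.cthickening d (tsupport v), hvc.isCompact.cthickening, hdU,
    Metric.self_subset_cthickening _, fun ε hε => ?_⟩
  have hdc : Continuous (fderiv ℝ v) := hv.continuous_fderiv one_ne_zero
  obtain ⟨r, hr, hrε⟩ := Metric.uniformContinuous_iff.1
    ((hvc.fderiv (𝕜 := ℝ)).uniformContinuous_of_continuous hdc) ε hε
  set m := min r d with hm
  have hm0 : 0 < m := lt_min hr hd
  let φ : ContDiffBump (0 : E) := ⟨m / 2, m, by positivity, by linarith⟩
  set ψ : E → ℝ := convolution (φ.normed μ) v (ContinuousLinearMap.lsmul ℝ ℝ) μ with hψ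
  have hsupp : tsupport ψ ⊆ Metric.cthickening d (tsupport v) := by
    refine closure_minimal ?_ Metric.isClosed_cthickening
    refine (support_convolution_subset _).trans ?_
    rintro _ ⟨a, ha, b, hb, rfl⟩
    rw [φ.support_normed_eq] at ha
    refine Metric.mem_cthickening_of_dist_le _ b _ _ (subset_tsupport _ hb) ?_
    have : ‖a‖ < m := by simpa using ha
    simpa using this.le.trans (min_le_right _ _)
  refine ⟨ψ, ?_, ?_, hsupp, fun x => ?_⟩
  · exact φ.hasCompactSupport_normed.contDiff_convolution_left _ φ.contDiff_normed
      (hv.continuous.locallyIntegrable)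
  · exact hvc.isCompact.cthickening.of_isClosed_subset (isClosed_tsupport _) hsupp
  · have h1 := hvc.hasFDerivAt_convolution_right (μ := μ) (ContinuousLinearMap.lsmul ℝ ℝ)
      (φ.continuous_normed (μ := μ)).locallyIntegrable hv x
    have h2 : ContinuousLinearMap.precompR E (ContinuousLinearMap.lsmul ℝ ℝ : ℝ →L[ℝ] ℝ →L[ℝ] ℝ)
        = ContinuousLinearMap.lsmul ℝ ℝ := by
      ext; simp
    rw [h2] at h1
    rw [h1.fderiv, ← dist_eq_norm]
    refine φ.dist_normed_convolution_le hdc.aestronglyMeasurable fun y hy => ?_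
    exact (hrε (lt_of_lt_of_le (Metric.mem_ball.1 hy) (min_le_left _ _))).le

/-- For a continuous flux, the weak formulation extends from smooth to `C¹` test functions. -/
theorem weak_form_of_contDiff_one (μ : Measure E) [μ.IsAddHaarMeasure] {U : Set E} (hU : IsOpen U)
    {F : E → E} (hF : ContinuousOn F U)
    (hweak : ∀ ψ : E → ℝ, ContDiff ℝ (⊤ : ℕ∞) ψ → HasCompactSupport ψ → tsupport ψ ⊆ U →
      ∫ x in U, fderiv ℝ ψ x (F x) ∂μ = 0)
    {v : E → ℝ} (hv : ContDiff ℝ 1 v) (hvc : HasCompactSupport v) (hvU : tsupport v ⊆ U) :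
    ∫ x in U, fderiv ℝ v x (F x) ∂μ = 0 := by
  obtain ⟨T, hT, hTU, hvT, happ⟩ := exists_smooth_approx μ hU hv hvc hvU
  obtain ⟨C, hC⟩ := hT.exists_bound_of_continuousOn (hF.mono hTU)
  have key : ∀ w : E → ℝ, ContDiff ℝ 1 w → tsupport w ⊆ T →
      IntegrableOn (fun x => fderiv ℝ w x (F x)) T μ ∧
      ∫ x in U, fderiv ℝ w x (F x) ∂μ = ∫ x in T, fderiv ℝ w x (F x) ∂μ := by
    intro w hw hwT
    refine ⟨ContinuousOn.integrableOn_compact hT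
      ((hw.continuous_fderiv one_ne_zero).continuousOn.clm_apply (hF.mono hTU)), ?_⟩
    refine setIntegral_eq_of_subset_of_forall_sdiff_eq_zero hU.measurableSet hTU fun x hx => ?_
    have : fderiv ℝ w x = 0 :=
      image_eq_zero_of_notMem_tsupport fun h => hx.2 (hwT (tsupport_fderiv_subset ℝ h))
    simp [this]
  have hb : ∀ ε > 0, ‖∫ x in U, fderiv ℝ v x (F x) ∂μ‖ ≤ ε * C * μ.real T := by
    intro ε hε
    obtain ⟨ψ, hψ, hψc, hψT, hψε⟩ := happ ε hε
    have h0 := hweak ψ hψ hψc (hψT.trans hTU)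
    have hψ1 : ContDiff ℝ 1 ψ := hψ.of_le (by exact_mod_cast le_top)
    obtain ⟨i1, e1⟩ := key v hv hvT
    obtain ⟨i2, e2⟩ := key ψ hψ1 hψT
    rw [e2] at h0
    rw [e1, ← sub_zero (∫ x in T, fderiv ℝ v x (F x) ∂μ), ← h0, ← integral_sub i1 i2]
    refine norm_setIntegral_le_of_norm_le_const hT.measure_lt_top fun x hx => ?_
    rw [← sub_apply]
    refine (ContinuousLinearMap.le_opNorm _ _).trans ?_
    rw [norm_sub_rev]
    exact mul_le_mul (hψε x) (hC x hx) (norm_nonneg _) hε.le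
  rw [← norm_le_zero_iff]
  refine ge_of_tendsto (x := 𝓝[>] (0:ℝ)) (f := fun ε => ε * C * μ.real T) ?_ ?_
  · have : Tendsto (fun ε : ℝ => ε * C * μ.real T) (𝓝 0) (𝓝 (0 * C * μ.real T)) :=
      Continuous.tendsto (by fun_prop) 0
    simpa using this.mono_left nhdsWithin_le_nhds
  · filter_upwards [self_mem_nhdsWithin] with ε hε using hb ε hε

/-! ### Cutoff functions of small energy -/

/-- For `p ≥ max 2 (dim E)` every ball has `p`-capacity zero in the whole space. The cutoff is the average
of `N` dilates of a fixed bump function; each dilate has energy at most that of the bump, and the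
gradients have disjoint supports, so the average has energy `O(N ^ (1 - p))`. -/
theorem exists_cutoff (μ : Measure E) [μ.IsAddHaarMeasure] {p : ℝ} (hp2 : 2 ≤ p)
    (hp : (Module.finrank ℝ E : ℝ) ≤ p) {R : ℝ} (hR : 1 ≤ R) {ε : ℝ} (hε : 0 < ε) :
    ∃ η : E → ℝ, ContDiff ℝ 1 η ∧ HasCompactSupport η ∧ (∀ x, 0 ≤ η x) ∧ (∀ x, η x ≤ 1) ∧
      (∀ x, ‖x‖ ≤ R → η x = 1) ∧ ∫ x, ‖fderiv ℝ η x‖ ^ p ∂μ ≤ ε := by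
  let φ : ContDiffBump (0 : E) := ⟨1, 2, by norm_num, by norm_num⟩
  have hφ1 : ContDiff ℝ 1 φ := φ.contDiff
  have hφd : Continuous (fderiv ℝ φ) := hφ1.continuous_fderiv one_ne_zero
  set I := ∫ x, ‖fderiv ℝ φ x‖ ^ p ∂μ with hI
  have hI0 : 0 ≤ I := integral_nonneg fun x => Real.rpow_nonneg (norm_nonneg _) _
  have hann : ∀ y, fderiv ℝ φ y ≠ 0 → 1 ≤ ‖y‖ ∧ ‖y‖ ≤ 2 := by
    intro y hy
    constructor
    · by_contra! h
      refine hy ?_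
      have : (φ : E → ℝ) =ᶠ[𝓝 y] fun _ => 1 := by
        filter_upwards [Metric.isOpen_ball.mem_nhds (show y ∈ Metric.ball (0:E) 1 by simpa using h)]
          with z hz
        exact φ.one_of_mem_closedBall (Metric.ball_subset_closedBall hz)
      rw [this.fderiv_eq, fderiv_fun_const]; rfl
    · have h := tsupport_fderiv_subset ℝ (subset_tsupport _ hy)
      rw [φ.tsupport_eq] at h
      simpa using h
  -- average `N` dilates of `φ`, at scales `R * 4 ^ j` sparse enough for their annuli to be disjoint
  obtain ⟨N, hN⟩ := exists_nat_gt (I / ε)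
  have hN0 : (0:ℝ) < N := lt_of_le_of_lt (by positivity) hN
  have hN1 : (1:ℝ) ≤ N := by exact_mod_cast (Nat.cast_pos.1 hN0)
  set s : ℕ → ℝ := fun j => (R * 4 ^ j)⁻¹ with hs
  have hs0 : ∀ j, 0 < s j := fun j => by positivity
  have hR4 : ∀ j : ℕ, R ≤ R * 4 ^ j := fun j =>
    le_mul_of_one_le_right (by linarith) (one_le_pow₀ (by norm_num))
  have hs1 : ∀ j, s j ≤ 1 := fun j => inv_le_one_of_one_le₀ (hR.trans (hR4 j))
  have hnorm : ∀ j (x : E), ‖s j • x‖ = s j * ‖x‖ := fun j x => by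
    rw [norm_smul, Real.norm_of_nonneg (hs0 j).le]
  set f : ℕ → E → ℝ := fun j x => φ (s j • x) with hf
  have hfC : ∀ j, ContDiff ℝ 1 (f j) := fun j => hφ1.comp (contDiff_const_smul _)
  have hfd : ∀ j x, fderiv ℝ (f j) x = s j • fderiv ℝ φ (s j • x) := fun j x =>
    fderiv_comp_smul (s j)
  have hfcs : ∀ j, HasCompactSupport (f j) := fun j =>
    φ.hasCompactSupport.comp_smul (hs0 j).ne'
  have hfint : ∀ j, ∫ x, ‖fderiv ℝ (f j) x‖ ^ p ∂μ ≤ I := by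
    intro j
    have h1 : ∀ x, ‖fderiv ℝ (f j) x‖ ^ p = s j ^ p * ‖fderiv ℝ φ (s j • x)‖ ^ p := fun x => by
      rw [hfd, norm_smul, Real.norm_of_nonneg (hs0 j).le, Real.mul_rpow (hs0 j).le (norm_nonneg _)]
    simp only [h1]
    rw [integral_const_mul, Measure.integral_comp_smul μ (fun y => ‖fderiv ℝ φ y‖ ^ p), ← hI,
      smul_eq_mul, ← mul_assoc, abs_of_nonneg (by have := hs0 j; positivity)]
    refine mul_le_of_le_one_left hI0 ?_
    -- `s ^ p ≤ s ^ dim E`, because `s ≤ 1` and `dim E ≤ p`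
    rw [mul_inv_le_iff₀ (pow_pos (hs0 j) _), one_mul, ← Real.rpow_natCast]
    exact Real.rpow_le_rpow_of_exponent_ge (hs0 j) (hs1 j) hp
  set η : E → ℝ := fun x => (N:ℝ)⁻¹ * ∑ j ∈ Finset.range N, f j x with hη
  have hηd : ∀ x, fderiv ℝ η x = (N:ℝ)⁻¹ • ∑ j ∈ Finset.range N, fderiv ℝ (f j) x := by
    intro x
    have hd : ∀ j ∈ Finset.range N, DifferentiableAt ℝ (f j) x := fun j _ =>
      (hfC j).contDiffAt.differentiableAt one_ne_zero
    rw [hη, fderiv_const_mul (DifferentiableAt.fun_sum hd), fderiv_fun_sum hd]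
  have hsum1 : ∀ x, (∀ j, f j x ≤ 1) := fun x j => φ.le_one
  refine ⟨η, ?_, ?_, ?_, ?_, ?_, ?_⟩
  · exact contDiff_const.mul (ContDiff.sum fun j _ => hfC j)
  · refine HasCompactSupport.mul_left (f := fun _ => (N:ℝ)⁻¹) ?_
    refine HasCompactSupport.of_support_subset_isCompact
      ((Finset.range N).isCompact_biUnion fun j _ => (hfcs j).isCompact) fun x hx => ?_
    obtain ⟨j, hj, hj0⟩ := Finset.exists_ne_zero_of_sum_ne_zero hx
    exact mem_biUnion hj (subset_tsupport _ hj0)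
  · exact fun x => mul_nonneg (by positivity) (Finset.sum_nonneg fun j _ => φ.nonneg)
  · intro x
    rw [hη]
    simp only
    rw [inv_mul_le_iff₀ hN0, mul_one]
    calc _ ≤ ∑ j ∈ Finset.range N, (1:ℝ) := Finset.sum_le_sum fun j _ => hsum1 x j
      _ = N := by simp
  · intro x hx
    have : ∀ j, f j x = 1 := fun j => by
      refine φ.one_of_mem_closedBall ?_
      rw [mem_closedBall_zero_iff, hnorm]
      change (R * 4 ^ j)⁻¹ * ‖x‖ ≤ 1
      rw [inv_mul_le_iff₀ (by positivity), mul_one]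
      exact hx.trans (hR4 j)
    simp [hη, this, hN0.ne']
  · have hdis : ∀ x i j, i < j → fderiv ℝ (f i) x ≠ 0 → fderiv ℝ (f j) x ≠ 0 → False := by
      intro x i j hij hi hj
      rw [hfd] at hi hj
      have h1 := (hann _ (right_ne_zero_of_smul hi)).2
      have h2 := (hann _ (right_ne_zero_of_smul hj)).1
      rw [hnorm] at h1 h2
      change (R * 4 ^ i)⁻¹ * ‖x‖ ≤ 2 at h1
      change 1 ≤ (R * 4 ^ j)⁻¹ * ‖x‖ at h2
      rw [inv_mul_le_iff₀ (by positivity)] at h1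
      rw [le_inv_mul_iff₀ (by positivity)] at h2
      have h3 : (4:ℝ) ^ (i+1) ≤ 4 ^ j := pow_le_pow_right₀ (by norm_num) hij
      have h4 : (0:ℝ) < R * 4 ^ i := by positivity
      have h5 : R * 4 ^ (i+1) ≤ R * 4 ^ j := by gcongr
      rw [pow_succ] at h5
      linarith
    have hpt : ∀ x, ‖fderiv ℝ η x‖ ^ p ≤
        ((N:ℝ)⁻¹) ^ p * ∑ j ∈ Finset.range N, ‖fderiv ℝ (f j) x‖ ^ p := by
      intro x
      rw [hηd, norm_smul, Real.mul_rpow (norm_nonneg _) (norm_nonneg _),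
        Real.norm_of_nonneg (by positivity)]
      refine mul_le_mul_of_nonneg_left ?_ (by positivity)
      refine norm_sum_rpow_le (by linarith) _ _ fun i _ j _ hi hj => ?_
      by_contra hne
      rcases lt_or_gt_of_ne hne with h | h
      · exact hdis x i j h hi hj
      · exact hdis x j i h hj hi
    have hint : ∀ j ∈ Finset.range N, Integrable (fun x => ‖fderiv ℝ (f j) x‖ ^ p) μ := by
      intro j _
      refine Continuous.integrable_of_hasCompactSupport ?_ ?_
      · exact ((hfC j).continuous_fderiv one_ne_zero).norm.rpow_const fun _ => Or.inr (by linarith)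
      · exact ((hfcs j).fderiv (𝕜 := ℝ)).comp_left (g := fun y => ‖y‖ ^ p)
          (by simp [Real.zero_rpow (show p ≠ 0 by linarith)])
    calc ∫ x, ‖fderiv ℝ η x‖ ^ p ∂μ
        ≤ ∫ x, ((N:ℝ)⁻¹) ^ p * ∑ j ∈ Finset.range N, ‖fderiv ℝ (f j) x‖ ^ p ∂μ := by
          refine integral_mono_of_nonneg (Eventually.of_forall fun x =>
            Real.rpow_nonneg (norm_nonneg _) _) ?_ (Eventually.of_forall hpt)
          exact (integrable_finsetSum _ hint).const_mul _
      _ = ((N:ℝ)⁻¹) ^ p * ∑ j ∈ Finset.range N, ∫ x, ‖fderiv ℝ (f j) x‖ ^ p ∂μ := by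
          rw [integral_const_mul, integral_finsetSum _ hint]
      _ ≤ ((N:ℝ)⁻¹) ^ (2:ℝ) * (N * I) := by
          refine mul_le_mul ?_ ?_ (Finset.sum_nonneg fun j _ => integral_nonneg fun x =>
            Real.rpow_nonneg (norm_nonneg _) _) (by positivity)
          · exact Real.rpow_le_rpow_of_exponent_ge (by positivity) (inv_le_one_of_one_le₀ hN1) hp2
          · calc _ ≤ ∑ j ∈ Finset.range N, I := Finset.sum_le_sum fun j _ => hfint j
              _ = N * I := by simp
      _ = I / N := by
          rw [Real.rpow_two]; field_simp
      _ ≤ ε := by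
          rw [div_lt_iff₀ hε] at hN
          rw [div_le_iff₀ hN0]; linarith

/-! ### Energy estimate and one-sided bound -/

/-- Extension by zero across `K` is continuous when the function vanishes near `K`. -/
theorem continuous_of_eventually_zero {X Y : Type*} [TopologicalSpace X] [TopologicalSpace Y]
    [Zero Y] {K : Set X} (hK : IsClosed K) {f : X → Y} (h0 : ∀ x ∈ K, f =ᶠ[𝓝 x] 0)
    (hf : ContinuousOn f Kᶜ) : Continuous f := by
  refine continuous_iff_continuousAt.2 fun x => ?_
  by_cases hx : x ∈ K
  · exact (continuousAt_const (y := (0 : Y))).congr (h0 x hx).symm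
  · exact hf.continuousAt (hK.isOpen_compl.mem_nhds hx)

/-- Caccioppoli estimate for a flux `F` with the ellipticity and growth of the `p`-Laplacian. Here `g`
stands for a truncation `(u - k)⁺` vanishing near `K`, which enters only through `hgd`: the gradient
of `g ^ 2` is `2 g ∇u`. The estimate follows by testing the equation with `g ^ 2 * η ^ p`: the first
power of `g` left in the gradient serves as a common weight in Young's inequality. -/
theorem caccioppoli (μ : Measure E) [μ.IsAddHaarMeasure] {p : ℝ} (hp2 : 2 ≤ p)
    {K : Set E} (hK : IsClosed K) {u : E → ℝ} (hu : ContDiffOn ℝ 1 u Kᶜ)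
    {F : E → E} (hF : ContinuousOn F Kᶜ) {L δ : ℝ} (hL : 0 ≤ L) (hδ : 0 < δ)
    (hell : ∀ x ∈ Kᶜ, δ * ‖fderiv ℝ u x‖ ^ p ≤ fderiv ℝ u x (F x))
    (hgr : ∀ x ∈ Kᶜ, ‖F x‖ ≤ L * ‖fderiv ℝ u x‖ ^ (p - 1))
    (hweak : ∀ ψ : E → ℝ, ContDiff ℝ (⊤ : ℕ∞) ψ → HasCompactSupport ψ → tsupport ψ ⊆ Kᶜ →
      ∫ x in Kᶜ, fderiv ℝ ψ x (F x) ∂μ = 0)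
    {g : E → ℝ} {G : ℝ} (hG : 0 ≤ G) (hg : Continuous g) (hgn : ∀ x, 0 ≤ g x) (hgG : ∀ x, g x ≤ G)
    (hgK : ∀ x ∈ K, g =ᶠ[𝓝 x] 0)
    (hgd : ∀ x, HasFDerivAt (fun y => g y ^ 2) ((2 * g x) • fderiv ℝ u x) x)
    {η : E → ℝ} (hη : ContDiff ℝ 1 η) (hηc : HasCompactSupport η) (hηn : ∀ x, 0 ≤ η x) :
    δ * ∫ x, g x * ‖fderiv ℝ u x‖ ^ p * η x ^ p ∂μ ≤
      G * p * L * (G * p * L / δ) ^ (p - 1) * G * ∫ x, ‖fderiv ℝ η x‖ ^ p ∂μ := by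
  have hp0 : p ≠ 0 := by linarith
  have hp1 : p - 1 ≠ 0 := by linarith
  have hdu : ContinuousOn (fderiv ℝ u) Kᶜ := hu.continuousOn_fderiv_of_isOpen hK.isOpen_compl le_rfl
  have hgz : ∀ x ∈ K, g x = 0 := fun x hx => (hgK x hx).eq_of_nhds
  have hvd : fderiv ℝ (fun y => g y ^ 2) = fun x => (2 * g x) • fderiv ℝ u x :=
    funext fun x => (hgd x).fderiv
  have hv : ContDiff ℝ 1 (fun y => g y ^ 2) := by
    refine contDiff_one_iff_fderiv.2 ⟨fun x => (hgd x).differentiableAt, ?_⟩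
    rw [hvd]
    refine continuous_of_eventually_zero hK (fun x hx => ?_)
      ((hg.continuousOn.const_mul 2 |>.mono (subset_univ _)).smul hdu)
    filter_upwards [hgK x hx] with y hy
    simp [hy]
  set h : E → ℝ := fun y => g y ^ 2 * η y ^ p with hh
  have hηp : ContDiff ℝ 1 (fun y => η y ^ p) :=
    hη.rpow_const_of_le (by norm_num; linarith)
  have hhC : ContDiff ℝ 1 h := hv.mul hηp
  have hηpc : HasCompactSupport (fun y => η y ^ p) :=
    hηc.comp_left (g := fun t : ℝ => t ^ p) (Real.zero_rpow hp0)
  have hhc : HasCompactSupport h := hηpc.mul_left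
  have hhK : ∀ x ∈ K, h =ᶠ[𝓝 x] 0 := fun x hx => by
    filter_upwards [hgK x hx] with y hy
    simp [hh, hy]
  have hhU : tsupport h ⊆ Kᶜ := fun x hx hxK =>
    notMem_tsupport_iff_eventuallyEq.2 (hhK x hxK) hx
  have hdh : ∀ x, fderiv ℝ h x = g x ^ 2 • ((p * η x ^ (p - 1)) • fderiv ℝ η x) +
      η x ^ p • ((2 * g x) • fderiv ℝ u x) := fun x =>
    ((hgd x).mul (((hη.contDiffAt.differentiableAt one_ne_zero).hasFDerivAt).rpow_const
      (Or.inr (by linarith)))).fderiv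
  have hdhK : ∀ x ∈ K, fderiv ℝ h =ᶠ[𝓝 x] 0 := fun x hx => by
    filter_upwards [hgK x hx] with y hy
    rw [hdh]; simp [hy]
  -- the weak formulation tested with `h = g² η ^ p`
  have hzero : ∫ x, fderiv ℝ h x (F x) ∂μ = 0 := by
    rw [← weak_form_of_contDiff_one μ hK.isOpen_compl hF hweak hhC hhc hhU]
    refine (setIntegral_eq_integral_of_forall_compl_eq_zero fun x hx => ?_).symm
    rw [(hdhK x (not_not.1 hx)).eq_of_nhds]; simp
  have hint1 : Integrable (fun x => fderiv ℝ h x (F x)) μ := by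
    refine Continuous.integrable_of_hasCompactSupport ?_ ?_
    · refine continuous_of_eventually_zero hK (fun x hx => ?_)
        ((hhC.continuous_fderiv one_ne_zero).continuousOn.clm_apply hF)
      filter_upwards [hdhK x hx] with y hy
      simp [hy]
    · refine (hhc.fderiv (𝕜 := ℝ)).mono fun x hx hx0 => hx ?_
      simp [hx0]
  have hint2 : Integrable (fun x => ‖fderiv ℝ η x‖ ^ p) μ := by
    refine Continuous.integrable_of_hasCompactSupport
      ((hη.continuous_fderiv one_ne_zero).norm.rpow_const fun _ => Or.inr (by linarith)) ?_
    exact (hηc.fderiv (𝕜 := ℝ)).comp_left (g := fun y => ‖y‖ ^ p) (by simp [Real.zero_rpow hp0])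
  set C := G * p * L with hC
  have hC0 : 0 ≤ C := by positivity
  have hpt : ∀ x, δ * (g x * ‖fderiv ℝ u x‖ ^ p * η x ^ p) ≤
      fderiv ℝ h x (F x) + C * (C / δ) ^ (p - 1) * G * ‖fderiv ℝ η x‖ ^ p := by
    intro x
    have hr0 : 0 ≤ C * (C / δ) ^ (p - 1) * G * ‖fderiv ℝ η x‖ ^ p := by positivity
    by_cases hx : x ∈ K
    · rw [(hdhK x hx).eq_of_nhds, hgz x hx]
      simpa using hr0
    · have hη0 := hηn x
      have hg0 := hgn x
      have hy := young_split (show 1 ≤ p by linarith)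
        (mul_nonneg hη0 (norm_nonneg (fderiv ℝ u x))) (norm_nonneg (fderiv ℝ η x)) hC0 hδ
      rw [Real.mul_rpow hη0 (norm_nonneg _), Real.mul_rpow hη0 (norm_nonneg _)] at hy
      have hF1 : -(‖fderiv ℝ η x‖ * (L * ‖fderiv ℝ u x‖ ^ (p - 1))) ≤ fderiv ℝ η x (F x) := by
        have h1 := (fderiv ℝ η x).le_opNorm (F x)
        have h2 := mul_le_mul_of_nonneg_left (hgr x hx) (norm_nonneg (fderiv ℝ η x))
        have h3 := neg_abs_le (fderiv ℝ η x (F x))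
        rw [Real.norm_eq_abs] at h1
        linarith
      have hF2 := hell x hx
      have e : fderiv ℝ h x (F x) = g x ^ 2 * (p * η x ^ (p - 1)) * fderiv ℝ η x (F x) +
          η x ^ p * (2 * g x) * fderiv ℝ u x (F x) := by
        rw [hdh]; simp; ring
      rw [e]
      set a := η x ^ (p - 1) * ‖fderiv ℝ u x‖ ^ (p - 1) with ha
      set b := ‖fderiv ℝ η x‖ with hb
      have m1 := mul_le_mul_of_nonneg_left hF1
        (show 0 ≤ g x ^ 2 * (p * η x ^ (p - 1)) by positivity)
      have m2 := mul_le_mul_of_nonneg_left hF2 (show 0 ≤ η x ^ p * (2 * g x) by positivity)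
      have m3 := mul_le_mul_of_nonneg_left hy hg0
      -- one factor `g` is bounded by `G`, the other is kept as the weight
      have m4 : g x * (g x * (p * L * a * b)) ≤ g x * (G * (p * L * a * b)) := by
        have := hgG x
        gcongr
      have m5 : g x * (C * (C / δ) ^ (p - 1) * b ^ p) ≤ G * (C * (C / δ) ^ (p - 1) * b ^ p) := by
        have := hgG x
        gcongr
      have m6 : g x * (C * a * b) = g x * (G * (p * L * a * b)) := by rw [hC]; ring
      have m7 : g x ^ 2 * (p * η x ^ (p - 1)) * -(b * (L * ‖fderiv ℝ u x‖ ^ (p - 1))) =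
          -(g x * (g x * (p * L * a * b))) := by rw [ha]; ring
      linarith
  have hfin : ∫ x, δ * (g x * ‖fderiv ℝ u x‖ ^ p * η x ^ p) ∂μ ≤
      ∫ x, (fderiv ℝ h x (F x) + C * (C / δ) ^ (p - 1) * G * ‖fderiv ℝ η x‖ ^ p) ∂μ := by
    refine integral_mono_of_nonneg (Eventually.of_forall fun x => ?_)
      (hint1.add (hint2.const_mul _)) (Eventually.of_forall hpt)
    have := hgn x
    have := hηn x
    simp only [Pi.zero_apply]
    positivity
  rwa [integral_const_mul, integral_add hint1 (hint2.const_mul _), hzero, integral_const_mul,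
    zero_add] at hfin

/-- One-sided Liouville property: a weak solution bounded above on `Kᶜ`, with boundary values `c` on
`frontier K`, is at most `c`. -/
theorem weak_solution_le (μ : Measure E) [μ.IsAddHaarMeasure] {p : ℝ} (hp2 : 2 ≤ p)
    (hp : (Module.finrank ℝ E : ℝ) ≤ p) {K : Set E} (hK : IsClosed K) (hKne : K.Nonempty)
    {u : E → ℝ} (hu : ContDiffOn ℝ 1 u Kᶜ) {M : ℝ} (hM : ∀ x ∈ Kᶜ, u x ≤ M)
    {F : E → E} (hF : ContinuousOn F Kᶜ) {L δ : ℝ} (hL : 0 ≤ L) (hδ : 0 < δ)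
    (hell : ∀ x ∈ Kᶜ, δ * ‖fderiv ℝ u x‖ ^ p ≤ fderiv ℝ u x (F x))
    (hgr : ∀ x ∈ Kᶜ, ‖F x‖ ≤ L * ‖fderiv ℝ u x‖ ^ (p - 1))
    (hweak : ∀ ψ : E → ℝ, ContDiff ℝ (⊤ : ℕ∞) ψ → HasCompactSupport ψ → tsupport ψ ⊆ Kᶜ →
      ∫ x in Kᶜ, fderiv ℝ ψ x (F x) ∂μ = 0)
    {c : ℝ} (hc : ∀ x ∈ frontier K, Tendsto u (𝓝[Kᶜ] x) (𝓝 c)) :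
    ∀ x ∈ Kᶜ, u x ≤ c := by
  intro x₀ hx₀
  refine le_of_forall_pos_le_add fun ε hε => ?_
  have hp0 : p ≠ 0 := by linarith
  have hdu : ContinuousOn (fderiv ℝ u) Kᶜ := hu.continuousOn_fderiv_of_isOpen hK.isOpen_compl le_rfl
  set g : E → ℝ := Kᶜ.indicator fun x => max (u x - (c + ε)) 0 with hgdef
  have hgU : ∀ x ∈ Kᶜ, g x = max (u x - (c + ε)) 0 := fun x hx => indicator_of_mem hx _
  have hgz : ∀ x ∈ K, g x = 0 := fun x hx => indicator_of_notMem (not_not.2 hx) _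
  have hgK : ∀ x ∈ K, g =ᶠ[𝓝 x] 0 := by
    intro x hx
    by_cases hi : x ∈ interior K
    · filter_upwards [mem_interior_iff_mem_nhds.1 hi] with y hy using hgz y hy
    · have hlt := (hc x ⟨subset_closure hx, hi⟩).eventually_lt_const (show c < c + ε by linarith)
      filter_upwards [eventually_nhdsWithin_iff.1 hlt] with y hy
      by_cases hyK : y ∈ K
      · exact hgz y hyK
      · rw [hgU y hyK]
        exact max_eq_right (by linarith [hy hyK])
  have hg : Continuous g := by
    refine continuous_of_eventually_zero hK hgK ?_
    exact ((hu.continuousOn.sub continuousOn_const).sup continuousOn_const).congr hgU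
  have hgn : ∀ x, 0 ≤ g x := fun x => indicator_nonneg (fun y _ => le_max_right _ _) x
  set G := max (M - (c + ε)) 0 with hGdef
  have hG : 0 ≤ G := le_max_right _ _
  have hgG : ∀ x, g x ≤ G := by
    intro x
    by_cases hx : x ∈ K
    · rw [hgz x hx]; exact hG
    · rw [hgU x hx]
      exact max_le_max (by linarith [hM x hx]) le_rfl
  have hgd : ∀ x, HasFDerivAt (fun y => g y ^ 2) ((2 * g x) • fderiv ℝ u x) x := by
    intro x
    by_cases hx : x ∈ K
    · rw [hgz x hx, mul_zero, zero_smul]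
      refine (hasFDerivAt_const (0 : ℝ) x).congr_of_eventuallyEq ?_
      filter_upwards [hgK x hx] with y hy
      simp [hy]
    · have hUx : Kᶜ ∈ 𝓝 x := hK.isOpen_compl.mem_nhds hx
      have h1 : HasFDerivAt (fun y => u y - (c + ε)) (fderiv ℝ u x) x :=
        (((hu.contDiffAt hUx).differentiableAt one_ne_zero).hasFDerivAt).sub_const _
      have h2 := (hasDerivAt_max_sq (u x - (c + ε))).comp_hasFDerivAt x h1
      rw [hgU x hx]
      refine h2.congr_of_eventuallyEq ?_
      filter_upwards [hUx] with y hy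
      simp [hgU y hy]
  set q : E → ℝ := fun x => g x * ‖fderiv ℝ u x‖ ^ p with hq
  have hqn : ∀ x, 0 ≤ q x := fun x => mul_nonneg (hgn x) (by positivity)
  have hqc : Continuous q := by
    refine continuous_of_eventually_zero hK (fun x hx => ?_)
      (hg.continuousOn.mul (hdu.norm.rpow_const fun _ _ => Or.inr (by linarith)))
    filter_upwards [hgK x hx] with y hy
    simp [hq, hy]
  set D := G * p * L * (G * p * L / δ) ^ (p - 1) * G with hD
  have hD0 : 0 ≤ D := by positivity
  have hcac : ∀ η : E → ℝ, ContDiff ℝ 1 η → HasCompactSupport η → (∀ x, 0 ≤ η x) →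
      δ * ∫ x, q x * η x ^ p ∂μ ≤ D * ∫ x, ‖fderiv ℝ η x‖ ^ p ∂μ := fun η h1 h2 h3 =>
    caccioppoli μ hp2 hK hu hF hL hδ hell hgr hweak hG hg hgn hgG hgK hgd h1 h2 h3
  have hηint : ∀ η : E → ℝ, ContDiff ℝ 1 η → HasCompactSupport η →
      Continuous (fun x => q x * η x ^ p) ∧ HasCompactSupport (fun x => q x * η x ^ p) := by
    intro η h1 h2
    refine ⟨hqc.mul (h1.continuous.rpow_const fun _ => Or.inr (by linarith)), ?_⟩
    exact HasCompactSupport.mul_left (h2.comp_left (g := fun t : ℝ => t ^ p) (Real.zero_rpow hp0))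
  have hq0 : ∀ y, q y = 0 := by
    intro y
    by_contra hy
    -- integrate `q` against one fixed cutoff `η₀` near `y`; cutoffs of small energy that are `1` on
    -- its support force that integral to vanish
    obtain ⟨η₀, h1, h2, h3, h4, h5, -⟩ := exists_cutoff μ hp2 hp
      (show 1 ≤ ‖y‖ + 1 by linarith [norm_nonneg y]) one_pos
    obtain ⟨hc0, hcs0⟩ := hηint η₀ h1 h2
    have hpos : 0 < ∫ x, q x * η₀ x ^ p ∂μ := by
      refine hc0.integral_pos_of_hasCompactSupport_nonneg_nonzero hcs0
        (fun x => mul_nonneg (hqn x) (Real.rpow_nonneg (h3 x) _)) (x := y) ?_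
      simpa [h5 y (by linarith)] using hy
    obtain ⟨r, hr⟩ := h2.isCompact.isBounded.exists_norm_le
    have hsmall : ∀ e > 0, δ * ∫ x, q x * η₀ x ^ p ∂μ ≤ D * e := by
      intro e he
      obtain ⟨η, k1, k2, k3, k4, k5, k6⟩ := exists_cutoff μ hp2 hp (le_max_right r 1) he
      obtain ⟨hc1, hcs1⟩ := hηint η k1 k2
      calc δ * ∫ x, q x * η₀ x ^ p ∂μ ≤ δ * ∫ x, q x * η x ^ p ∂μ := by
            refine mul_le_mul_of_nonneg_left ?_ hδ.le
            refine integral_mono (hc0.integrable_of_hasCompactSupport hcs0)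
              (hc1.integrable_of_hasCompactSupport hcs1) fun x => ?_
            refine mul_le_mul_of_nonneg_left ?_ (hqn x)
            refine Real.rpow_le_rpow (h3 x) ?_ (by linarith)
            by_cases hx : x ∈ tsupport η₀
            · rw [k5 x ((hr x hx).trans (le_max_left _ _))]; exact h4 x
            · rw [image_eq_zero_of_notMem_tsupport hx]; exact k3 x
        _ ≤ D * ∫ x, ‖fderiv ℝ η x‖ ^ p ∂μ := hcac η k1 k2 k3
        _ ≤ D * e := mul_le_mul_of_nonneg_left k6 hD0
    have hJ : 0 < δ * ∫ x, q x * η₀ x ^ p ∂μ := mul_pos hδ hpos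
    set J := δ * ∫ x, q x * η₀ x ^ p ∂μ
    have := hsmall (J / (2 * (D + 1))) (by positivity)
    have h6 : D * (J / (2 * (D + 1))) < J := by
      rw [← mul_div_assoc, div_lt_iff₀ (by positivity)]
      nlinarith
    linarith
  -- the gradient of `g²` vanishes identically and `g` vanishes on `K`
  have hconst : ∀ x y, g x ^ 2 = g y ^ 2 := by
    refine is_const_of_fderiv_eq_zero (𝕜 := ℝ) (fun x => (hgd x).differentiableAt) fun x => ?_
    rw [(hgd x).fderiv]
    rcases mul_eq_zero.1 (hq0 x) with h | h
    · simp [h]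
    · rw [norm_eq_zero.1 ((Real.rpow_eq_zero (norm_nonneg _) hp0).1 h), smul_zero]
  obtain ⟨k, hk⟩ := hKne
  have h0 := hconst x₀ k
  rw [hgz k hk, hgU x₀ hx₀] at h0
  have := max_eq_right_iff.1 (pow_eq_zero_iff two_ne_zero |>.1 (h0.trans (by norm_num)))
  linarith

end

/-- Liouville property: if a bounded `C¹` weak solution of
`div(|∇u|^{p-2} A(|∇u|) ∇u) = 0` in `ℝⁿ \ K` (with `p ≥ n`) has the constant
limit `c` at every point of `∂K` from within `ℝⁿ \ K`, then `u ≡ c` on `ℝⁿ \ K`. -/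
theorem stmt_9 (n : ℕ) (hn : 2 ≤ n) (p : ℝ) (hp : (n : ℝ) ≤ p)
    (K : Set (EuclideanSpace ℝ (Fin n))) (hK : IsCompact K) (hKne : K.Nonempty)
    (A : ℝ → ℝ) (hA_cont : ContinuousOn A (Ici 0)) (hA0 : 0 < A 0)
    (hφ_mono : StrictMonoOn (fun t => t ^ (p - 1) * A t) (Ioi 0))
    (L δ : ℝ) (hδ : 0 < δ) (hδL : δ ≤ L)
    (hA_bound : ∀ t ≥ (0 : ℝ), δ ≤ A t ∧ A t ≤ L)
    (u : EuclideanSpace ℝ (Fin n) → ℝ)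
    (hu_C1 : ContDiffOn ℝ 1 u Kᶜ)
    (hu_bdd : ∃ M, ∀ x ∈ Kᶜ, |u x| ≤ M)
    (hu_weak : ∀ ψ : EuclideanSpace ℝ (Fin n) → ℝ,
      ContDiff ℝ (⊤ : ℕ∞) ψ → HasCompactSupport ψ → tsupport ψ ⊆ Kᶜ →
      ∫ x in Kᶜ, ‖gradient u x‖ ^ (p - 2) * A ‖gradient u x‖ *
        ⟪gradient u x, gradient ψ x⟫ = 0)
    (c : ℝ)
    (hc : ∀ x₀ ∈ frontier K, Tendsto u (𝓝[Kᶜ] x₀) (𝓝 c)) :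
    ∀ x ∈ Kᶜ, u x = c := by
  have hp2 : (2:ℝ) ≤ p := le_trans (by exact_mod_cast hn) hp
  have hpf : (Module.finrank ℝ (EuclideanSpace ℝ (Fin n)) : ℝ) ≤ p := by simpa using hp
  have hL : 0 ≤ L := hδ.le.trans hδL
  have hdu : ContinuousOn (fderiv ℝ u) Kᶜ :=
    hu_C1.continuousOn_fderiv_of_isOpen hK.isClosed.isOpen_compl le_rfl
  have hgrad : ContinuousOn (gradient u) Kᶜ :=
    (InnerProductSpace.toDual ℝ (EuclideanSpace ℝ (Fin n))).symm.continuous.comp_continuousOn hdu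
  have hnorm : ∀ x, ‖gradient u x‖ = ‖fderiv ℝ u x‖ := fun x => LinearIsometryEquiv.norm_map _ _
  have hinner : ∀ (w : EuclideanSpace ℝ (Fin n) → ℝ) x y, fderiv ℝ w x y = ⟪gradient w x, y⟫ :=
    fun w x y => by simp [gradient]
  set a : EuclideanSpace ℝ (Fin n) → ℝ := fun x => ‖gradient u x‖ ^ (p - 2) * A ‖gradient u x‖
    with ha
  have hFc : ContinuousOn (fun x => a x • gradient u x) Kᶜ := by
    refine ContinuousOn.smul (ContinuousOn.mul (M := ℝ) ?_ ?_) hgrad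
    · exact hgrad.norm.rpow_const fun _ _ => Or.inr (by linarith)
    · exact hA_cont.comp hgrad.norm fun x _ => norm_nonneg _
  have hpow1 : ∀ t : ℝ, 0 ≤ t → t ^ (p - 2) * t = t ^ (p - 1) := fun t ht => by
    rw [← Real.rpow_add_one' ht (by linarith)]; ring_nf
  have hpow2 : ∀ t : ℝ, 0 ≤ t → t ^ (p - 2) * t * t = t ^ p := fun t ht => by
    rw [hpow1 t ht, ← Real.rpow_add_one' ht (by linarith)]; ring_nf
  have hell : ∀ x, δ * ‖fderiv ℝ u x‖ ^ p ≤ fderiv ℝ u x (a x • gradient u x) := by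
    intro x
    rw [hinner, inner_smul_right, real_inner_self_eq_norm_sq, ← hnorm]
    have h1 := (hA_bound _ (norm_nonneg (gradient u x))).1
    calc δ * ‖gradient u x‖ ^ p ≤ A ‖gradient u x‖ * ‖gradient u x‖ ^ p := by gcongr
      _ = _ := by rw [← hpow2 _ (norm_nonneg _)]; simp only [ha]; ring
  have hgr : ∀ x, ‖a x • gradient u x‖ ≤ L * ‖fderiv ℝ u x‖ ^ (p - 1) := by
    intro x
    obtain ⟨h1, h2⟩ := hA_bound _ (norm_nonneg (gradient u x))
    have ha0 : 0 ≤ a x := mul_nonneg (by positivity) (hδ.le.trans h1)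
    rw [norm_smul, Real.norm_of_nonneg ha0, ← hnorm, ← hpow1 _ (norm_nonneg _)]
    simp only [ha]
    calc _ = A ‖gradient u x‖ * (‖gradient u x‖ ^ (p - 2) * ‖gradient u x‖) := by ring
      _ ≤ _ := by gcongr
  have hweak : ∀ ψ : EuclideanSpace ℝ (Fin n) → ℝ,
      ContDiff ℝ (⊤ : ℕ∞) ψ → HasCompactSupport ψ → tsupport ψ ⊆ Kᶜ →
      ∫ x in Kᶜ, fderiv ℝ ψ x (a x • gradient u x) = 0 := by
    intro ψ h1 h2 h3
    rw [← hu_weak ψ h1 h2 h3]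
    refine integral_congr_ae (Eventually.of_forall fun x => ?_)
    simp only [hinner, inner_smul_right, ha]
    rw [real_inner_comm]
  obtain ⟨M, hM⟩ := hu_bdd
  intro x hx
  refine le_antisymm ?_ ?_
  · exact weak_solution_le volume hp2 hpf hK.isClosed hKne hu_C1 (fun x hx => (abs_le.1 (hM x hx)).2)
      hFc hL hδ (fun x _ => hell x) (fun x _ => hgr x) hweak hc x hx
  · -- the equation is odd, so the upper bound also applies to `-u` with flux `-F`
    have hneg : ∀ x, fderiv ℝ (-u) x = -fderiv ℝ u x := fun x => fderiv_neg
    have := weak_solution_le volume hp2 hpf hK.isClosed hKne hu_C1.neg (u := -u) (M := M)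
      (fun x hx => by simpa using neg_le.1 (abs_le.1 (hM x hx)).1)
      (F := fun x => -(a x • gradient u x)) hFc.neg hL hδ
      (fun x _ => by rw [hneg]; simpa using hell x)
      (fun x _ => by rw [hneg, norm_neg, norm_neg]; exact hgr x)
      (fun ψ h1 h2 h3 => by
        simp only [map_neg, integral_neg, hweak ψ h1 h2 h3, neg_zero])
      (c := -c) (fun x hx => (hc x hx).neg) x hx
    simpa using this
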